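/- arXiv:2101.10259 — 2 statements merged into one kernel-verified Lean document; each statement's English description precedes it below -/
import Mathlib

section
/- Let Ω = (a₁,b₁)×(a₂,b₂) be an open rectangle in ℝ² (with a₁<b₁, a₂<b₂) and let φ = (φ₁,φ₂) : ℝ² → ℝ² be continuously differentiable on a neighborhood of the closure of Ω and satisfy the boundary condition φ·n = 0 on ∂Ω. If the Jacobian determinant g_Φ(x) = det ∇Φ(x) of the map Φ = id + φ is strictly positive for every x in the closure of Ω, then Φ maps the closure of Ω bijectively onto the closure of Ω (in particular Φ is a bijection from Ω onto Ω). -/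
/-!
Suppose `Φ` maps the closed box `K` to itself, fixes the `i`-th coordinate on the faces orthogonal
to `eᵢ`, and has an invertible derivative everywhere. At `z ∈ K` the directions tangent to the face
through `z` are preserved by the derivative, hence covered by it, so `Φᵢ` cannot be extremal on `K`
at a point with `aᵢ < zᵢ < bᵢ`. Therefore `Φᵢ` takes its extreme values on the faces orthogonal to
`eᵢ` only, which gives `Φ(K) ⊆ K` and `Φ(x) ∈ int K ↔ x ∈ int K`. By the inverse function theorem
`Φ` is then a local homeomorphism from the compact space `K` to itself, that is, a covering map, and
it is injective because `K` is simply connected.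
-/

open Set Filter Topology

section Covering

variable {X Y : Type*} [TopologicalSpace X] [TopologicalSpace Y]

theorem injective_of_isCoveringMap [PathConnectedSpace X] [SimplyConnectedSpace Y] {f : X → Y}
    (hf : IsCoveringMap f) : Function.Injective f := by
  intro x y hxy
  have hxy_fiber : hf.monodromy (.refl (f x)) ⟨x, rfl⟩ = ⟨y, hxy.symm⟩ :=
    hf.monodromy_eq_of_map_eq (.mk (PathConnectedSpace.somePath x y)) (Subsingleton.elim _ _)
  rw [hf.monodromy_refl] at hxy_fiber
  exact congrArg Subtype.val hxy_fiber

theorem surjective_of_isLocalHomeomorph [CompactSpace X] [Nonempty X] [T2Space Y]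
    [PreconnectedSpace Y] {f : X → Y} (hf : IsLocalHomeomorph f) : Function.Surjective f :=
  range_eq_univ.1 <| IsClopen.eq_univ
    ⟨(isCompact_range hf.continuous).isClosed, hf.isOpenMap.isOpen_range⟩ (range_nonempty f)

theorem isLocalHomeomorph_of_isLocallyInjective {f : X → Y} (hcont : Continuous f)
    (hopen : IsOpenMap f) (hinj : IsLocallyInjective f) : IsLocalHomeomorph f := by
  rw [isLocalHomeomorph_iff_isOpenEmbedding_restrict]
  intro x
  obtain ⟨U, hU, hxU, hinjU⟩ := hinj x
  exact ⟨U, hU.mem_nhds hxU, .of_continuous_injective_isOpenMap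
    (hcont.comp continuous_subtype_val) hinjU.injective (hopen.domRestrict hU)⟩

theorem bijective_of_isLocalHomeomorph [T2Space X] [CompactSpace X] [PathConnectedSpace X]
    [T2Space Y] [SimplyConnectedSpace Y] {f : X → Y} (hf : IsLocalHomeomorph f) :
    Function.Bijective f :=
  ⟨injective_of_isCoveringMap (isLocalHomeomorph_iff_isCoveringMap.1 hf),
    surjective_of_isLocalHomeomorph hf⟩

end Covering

section RelativelyOpen

variable {X F : Type*} [TopologicalSpace X] [SeminormedAddCommGroup F] [NormedSpace ℝ F]
  {K : Set X} {L : Set F} {x : X}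

theorem eventually_symm_mem_of_mem_interior_iff (e : OpenPartialHomeomorph X F)
    (hK : IsClosed K) (hKint : K ⊆ closure (interior K)) (hL : Convex ℝ L)
    (he : ∀ u ∈ e.source ∩ K, e u ∈ interior L ↔ u ∈ interior K)
    (hxe : x ∈ e.source) (hxK : x ∈ K) : ∀ᶠ y in 𝓝[L] e x, e.symm y ∈ K := by
  obtain ⟨r, hr, hball⟩ := Metric.mem_nhds_iff.1 (e.open_target.mem_nhds (e.map_source hxe))
  set G := Metric.ball (e x) r ∩ interior L
  have hG_target : G ⊆ e.target := inter_subset_left.trans hball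
  obtain ⟨u, ⟨hu_source, hu_ball⟩, hu⟩ : (e.source ∩ e ⁻¹' Metric.ball (e x) r ∩
      interior K).Nonempty :=
    mem_closure_iff.1 (hKint hxK) _ (e.isOpen_inter_preimage Metric.isOpen_ball)
      ⟨hxe, Metric.mem_ball_self hr⟩
  have hu_image : e u ∈ interior L := (he u ⟨hu_source, interior_subset hu⟩).2 hu
  have hG_preconnected : IsPreconnected (e.symm '' G) :=
    ((convex_ball _ _).inter hL.interior).isPreconnected.image _
      (e.continuousOn_symm.mono hG_target)
  -- A limit point of `interior K` lies in `K`, where `he` applies; so `e.symm` cannot leave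
  -- `interior K` along the connected set `G`.
  have hG_interior : e.symm '' G ⊆ interior K := by
    refine hG_preconnected.subset_of_closure_inter_subset isOpen_interior
      ⟨u, ⟨e u, ⟨hu_ball, hu_image⟩, e.left_inv hu_source⟩, hu⟩ ?_
    rintro _ ⟨hyK, y, hy, rfl⟩
    refine (he _ ⟨e.map_target (hG_target hy), closure_minimal interior_subset hK hyK⟩).1 ?_
    rw [e.right_inv (hG_target hy)]
    exact hy.2
  have hL_closure : L ⊆ closure (interior L) :=
    subset_closure.trans (hL.closure_interior_eq_closure_of_nonempty_interior ⟨_, hu_image⟩).ge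
  filter_upwards [mem_nhdsWithin_of_mem_nhds (Metric.ball_mem_nhds (e x) hr),
    self_mem_nhdsWithin] with y hy_ball hyL
  have hyG : y ∈ closure G := Metric.isOpen_ball.inter_closure ⟨hy_ball, hL_closure hyL⟩
  exact closure_minimal (hG_interior.trans interior_subset) hK
    (mem_closure_image (e.continuousAt_symm (hball hy_ball)) hyG)

theorem nhdsWithin_le_map_of_mem_interior_iff (e : OpenPartialHomeomorph X F)
    (hK : IsClosed K) (hKint : K ⊆ closure (interior K)) (hL : Convex ℝ L)
    (he : ∀ u ∈ e.source ∩ K, e u ∈ interior L ↔ u ∈ interior K)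
    (hxe : x ∈ e.source) (hxK : x ∈ K) : 𝓝[L] e x ≤ map e (𝓝[K] x) := by
  have hsymm : Tendsto e.symm (𝓝[L] e x) (𝓝[K] x) :=
    tendsto_nhdsWithin_iff.2 ⟨(e.tendsto_symm hxe).mono_left nhdsWithin_le_nhds,
      eventually_symm_mem_of_mem_interior_iff e hK hKint hL he hxe hxK⟩
  have hright_inv : ∀ᶠ y in 𝓝[L] e x, e (e.symm y) = y :=
    nhdsWithin_le_nhds (e.eventually_right_inverse' hxe)
  intro s hs
  filter_upwards [hsymm hs, hright_inv] with y hy hey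
  rwa [← hey]

end RelativelyOpen

section InvertibleDerivative

variable {E F : Type*} [NormedAddCommGroup E] [NormedSpace ℝ E] [CompleteSpace E]
  [NormedAddCommGroup F] [NormedSpace ℝ F] {K : Set E} {L : Set F} {f : E → F} {f' : E → E ≃L[ℝ] F}

theorem isLocallyInjective_domRestrict_of_hasStrictFDerivAt
    (hf : ∀ x ∈ K, HasStrictFDerivAt f (f' x : E →L[ℝ] F) x) :
    IsLocallyInjective (K.domRestrict f) := by
  rintro ⟨x, hx⟩
  set e := (hf x hx).toOpenPartialHomeomorph f
  exact ⟨Subtype.val ⁻¹' e.source, e.open_source.preimage continuous_subtype_val,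
    (hf x hx).mem_toOpenPartialHomeomorph_source,
    fun _ hu _ hv huv => Subtype.ext (e.injOn hu hv huv)⟩

theorem isLocalHomeomorph_restrict_of_hasStrictFDerivAt
    (hK : IsClosed K) (hKint : K ⊆ closure (interior K)) (hL : Convex ℝ L)
    (hf : ∀ x ∈ K, HasStrictFDerivAt f (f' x : E →L[ℝ] F) x) (hmaps : MapsTo f K L)
    (hint : ∀ x ∈ K, f x ∈ interior L ↔ x ∈ interior K) :
    IsLocalHomeomorph (hmaps.restrict f K L) := by
  refine isLocalHomeomorph_of_isLocallyInjective ?_ (.of_nhds_le fun ⟨x, hx⟩ => ?_) ?_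
  · exact ContinuousOn.mapsToRestrict
      (fun x hx => (hf x hx).continuousAt.continuousWithinAt) hmaps
  · have hopen := nhdsWithin_le_map_of_mem_interior_iff ((hf x hx).toOpenPartialHomeomorph f) hK
      hKint hL (fun u hu => hint u hu.2) (hf x hx).mem_toOpenPartialHomeomorph_source hx
    rw [← map_le_map_iff Subtype.val_injective, map_nhds_subtype_val, map_map]
    rw [← map_nhds_subtype_val ⟨x, hx⟩, map_map] at hopen
    exact hopen
  · intro x
    obtain ⟨U, hU, hxU, hinj⟩ := isLocallyInjective_domRestrict_of_hasStrictFDerivAt hf x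
    exact ⟨U, hU, hxU, fun u hu v hv huv => hinj hu hv (congrArg Subtype.val huv)⟩

theorem bijOn_of_hasStrictFDerivAt (hK : IsCompact K) (hKconn : IsPathConnected K)
    (hKint : K ⊆ closure (interior K)) (hL : Convex ℝ L)
    (hf : ∀ x ∈ K, HasStrictFDerivAt f (f' x : E →L[ℝ] F) x) (hmaps : MapsTo f K L)
    (hint : ∀ x ∈ K, f x ∈ interior L ↔ x ∈ interior K) : BijOn f K L := by
  have : CompactSpace K := isCompact_iff_compactSpace.1 hK
  have : PathConnectedSpace K := isPathConnected_iff_pathConnectedSpace.1 hKconn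
  have : ContractibleSpace L :=
    hL.contractibleSpace ((hKconn.nonempty.image f).mono hmaps.image_subset)
  obtain ⟨hinj, hsurj⟩ := bijective_of_isLocalHomeomorph
    (isLocalHomeomorph_restrict_of_hasStrictFDerivAt hK.isClosed hKint hL hf hmaps hint)
  exact ⟨hmaps, hmaps.restrict_inj.1 hinj, hmaps.restrict_surjective_iff.1 hsurj⟩

end InvertibleDerivative

section Box

variable {ι : Type*} {a b : ι → ℝ}

/-- The closed box `∏ᵢ [aᵢ, bᵢ]` in Euclidean space. -/
def closedBox (a b : ι → ℝ) : Set (EuclideanSpace ℝ ι) := {x | ∀ i, x i ∈ Icc (a i) (b i)}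

theorem closedBox_eq_preimage_Icc :
    closedBox a b = PiLp.homeomorph 2 (fun _ : ι => ℝ) ⁻¹' Icc a b := by
  ext x
  exact forall_and

theorem convex_closedBox : Convex ℝ (closedBox a b) := by
  intro x hx y hy s t hs ht hst i
  exact convex_Icc (a i) (b i) (hx i) (hy i) hs ht hst

theorem isCompact_closedBox : IsCompact (closedBox a b) := by
  rw [closedBox_eq_preimage_Icc, Homeomorph.isCompact_preimage]
  exact isCompact_Icc

theorem interior_closedBox [Finite ι] :
    interior (closedBox a b) = {x | ∀ i, x i ∈ Ioo (a i) (b i)} := by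
  rw [closedBox_eq_preimage_Icc, ← Homeomorph.preimage_interior, ← pi_univ_Icc,
    interior_pi_set finite_univ]
  simp_rw [interior_Icc]
  ext x
  exact mem_univ_pi

theorem nonempty_interior_closedBox [Finite ι] (hab : ∀ i, a i < b i) :
    (interior (closedBox a b)).Nonempty := by
  choose m hm using fun i => nonempty_Ioo.2 (hab i)
  rw [interior_closedBox]
  exact ⟨WithLp.toLp 2 m, hm⟩

theorem closure_interior_closedBox [Finite ι] (hab : ∀ i, a i < b i) :
    closure (interior (closedBox a b)) = closedBox a b := by
  have := Fintype.ofFinite ι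
  rw [convex_closedBox.closure_interior_eq_closure_of_nonempty_interior
    (nonempty_interior_closedBox hab), isCompact_closedBox.isClosed.closure_eq]

end Box

section Faces

variable {ι : Type*} {a b : ι → ℝ}

/-- The directions tangent to the smallest face of `closedBox a b` that contains `z`. -/
def faceDirections (a b : ι → ℝ) (z : EuclideanSpace ℝ ι) : Submodule ℝ (EuclideanSpace ℝ ι) where
  carrier := {v | ∀ k, z k ∉ Ioo (a k) (b k) → v k = 0}
  add_mem' hv hw k hk := by simp [hv k hk, hw k hk]
  zero_mem' _ _ := rfl
  smul_mem' c v hv k hk := by simp [hv k hk]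

/-- The map `Φ` preserves the `i`-th coordinate on the two faces of `closedBox a b` orthogonal to
the `i`-th axis. For `Φ = id + φ` this is the boundary condition `φ ⬝ n = 0`. -/
def FixesFaces (a b : ι → ℝ) (Φ : EuclideanSpace ℝ ι → EuclideanSpace ℝ ι) : Prop :=
  ∀ x ∈ closedBox a b, ∀ i, x i ∉ Ioo (a i) (b i) → Φ x i = x i

variable [Finite ι] {z : EuclideanSpace ℝ ι} {Φ : EuclideanSpace ℝ ι → EuclideanSpace ℝ ι}

theorem eventually_add_smul_mem_closedBox (hz : z ∈ closedBox a b) {v : EuclideanSpace ℝ ι}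
    (hv : v ∈ faceDirections a b z) : ∀ᶠ t : ℝ in 𝓝 0, z + t • v ∈ closedBox a b := by
  have := Fintype.ofFinite ι
  refine eventually_all.2 fun k => ?_
  by_cases hk : z k ∈ Ioo (a k) (b k)
  · have hcont : ContinuousAt (fun t : ℝ => (z + t • v) k) 0 := by fun_prop
    exact (hcont.eventually_mem (isOpen_Ioo.mem_nhds (by simpa using hk))).mono
      fun _ ht => Ioo_subset_Icc_self ht
  · exact .of_forall fun t => by simpa [hv k hk] using hz k

theorem hasLineDerivAt_apply {Φ' : EuclideanSpace ℝ ι →L[ℝ] EuclideanSpace ℝ ι}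
    (hΦ' : HasFDerivAt Φ Φ' z) (v : EuclideanSpace ℝ ι) (k : ι) :
    HasLineDerivAt ℝ (fun x => Φ x k) (Φ' v k) z v := by
  have := Fintype.ofFinite ι
  exact ((EuclideanSpace.proj k : EuclideanSpace ℝ ι →L[ℝ] ℝ).hasFDerivAt.comp z
    hΦ').hasLineDerivAt v

namespace FixesFaces

theorem mapsTo_faceDirections {Φ' : EuclideanSpace ℝ ι →L[ℝ] EuclideanSpace ℝ ι}
    (hΦ : FixesFaces a b Φ) (hΦ' : HasFDerivAt Φ Φ' z) (hz : z ∈ closedBox a b) :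
    MapsTo Φ' (faceDirections a b z) (faceDirections a b z) := by
  intro v hv k hk
  have hconst : (fun t : ℝ => Φ (z + t • v) k) =ᶠ[𝓝 0] fun _ => z k := by
    filter_upwards [eventually_add_smul_mem_closedBox hz hv] with t ht
    have hcoord : (z + t • v) k = z k := by simp [hv k hk]
    rw [hΦ _ ht k (by rwa [hcoord]), hcoord]
  exact (hasLineDerivAt_apply hΦ' v k).unique
    ((hasDerivAt_const 0 (z k)).congr_of_eventuallyEq hconst)

theorem surjOn_faceDirections {Φ' : EuclideanSpace ℝ ι ≃L[ℝ] EuclideanSpace ℝ ι}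
    (hΦ : FixesFaces a b Φ) (hΦ' : HasFDerivAt Φ (Φ' : _ →L[ℝ] _) z) (hz : z ∈ closedBox a b) :
    SurjOn Φ' (faceDirections a b z) (faceDirections a b z) :=
  (LinearMap.injOn_iff_surjOn (f := Φ'.toLinearMap) (hΦ.mapsTo_faceDirections hΦ' hz)).1
    Φ'.injective.injOn

theorem notMem_Ioo_of_isExtrOn {Φ' : EuclideanSpace ℝ ι ≃L[ℝ] EuclideanSpace ℝ ι}
    (hΦ : FixesFaces a b Φ) (hΦ' : HasFDerivAt Φ (Φ' : _ →L[ℝ] _) z) (hz : z ∈ closedBox a b)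
    {i : ι} (hextr : IsExtrOn (fun x => Φ x i) (closedBox a b) z) : z i ∉ Ioo (a i) (b i) := by
  classical
  intro hi
  have hdir : EuclideanSpace.single i (1 : ℝ) ∈ faceDirections a b z := by
    intro k hk
    have hki : k ≠ i := by rintro rfl; exact hk hi
    simp [hki]
  obtain ⟨v, hv, hΦ'v⟩ := hΦ.surjOn_faceDirections hΦ' hz hdir
  have hzero := hextr.hasLineDerivAt_eq_zero (hasLineDerivAt_apply hΦ' v i)
    (eventually_add_smul_mem_closedBox hz hv)
  simp [hΦ'v] at hzero

variable {Φ' : EuclideanSpace ℝ ι → EuclideanSpace ℝ ι ≃L[ℝ] EuclideanSpace ℝ ι}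

theorem mapsTo_closedBox (hΦ : FixesFaces a b Φ)
    (hΦ' : ∀ x ∈ closedBox a b, HasFDerivAt Φ (Φ' x : _ →L[ℝ] _) x) :
    MapsTo Φ (closedBox a b) (closedBox a b) := by
  have := Fintype.ofFinite ι
  intro x hx i
  have hcont : ContinuousOn (fun y => Φ y i) (closedBox a b) := by
    have hΦcont : ContinuousOn Φ (closedBox a b) :=
      fun y hy => (hΦ' y hy).continuousAt.continuousWithinAt
    fun_prop
  obtain ⟨p, hp, hpmin⟩ := isCompact_closedBox.exists_isMinOn ⟨x, hx⟩ hcont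
  obtain ⟨q, hq, hqmax⟩ := isCompact_closedBox.exists_isMaxOn ⟨x, hx⟩ hcont
  have hpi : Φ p i = p i := hΦ p hp i (hΦ.notMem_Ioo_of_isExtrOn (hΦ' p hp) hp hpmin.isExtr)
  have hqi : Φ q i = q i := hΦ q hq i (hΦ.notMem_Ioo_of_isExtrOn (hΦ' q hq) hq hqmax.isExtr)
  exact ⟨(hp i).1.trans (hpi.ge.trans (hpmin hx)), (hqmax hx).trans (hqi.le.trans (hq i).2)⟩

theorem apply_mem_Ioo_iff (hΦ : FixesFaces a b Φ)
    (hΦ' : ∀ x ∈ closedBox a b, HasFDerivAt Φ (Φ' x : _ →L[ℝ] _) x) {x : EuclideanSpace ℝ ι}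
    (hx : x ∈ closedBox a b) (i : ι) : Φ x i ∈ Ioo (a i) (b i) ↔ x i ∈ Ioo (a i) (b i) := by
  have hmaps := hΦ.mapsTo_closedBox hΦ'
  refine ⟨fun hi => ?_, fun hi => ?_⟩
  · by_contra hxi
    exact hxi (hΦ x hx i hxi ▸ hi)
  · refine ⟨(hmaps hx i).1.lt_of_ne fun hmin => ?_, (hmaps hx i).2.lt_of_ne fun hmax => ?_⟩
    · exact hΦ.notMem_Ioo_of_isExtrOn (hΦ' x hx) hx
        (.inl fun y hy => hmin.symm.le.trans (hmaps hy i).1) hi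
    · exact hΦ.notMem_Ioo_of_isExtrOn (hΦ' x hx) hx
        (.inr fun y hy => (hmaps hy i).2.trans hmax.ge) hi

theorem apply_mem_interior_closedBox_iff (hΦ : FixesFaces a b Φ)
    (hΦ' : ∀ x ∈ closedBox a b, HasFDerivAt Φ (Φ' x : _ →L[ℝ] _) x) {x : EuclideanSpace ℝ ι}
    (hx : x ∈ closedBox a b) :
    Φ x ∈ interior (closedBox a b) ↔ x ∈ interior (closedBox a b) := by
  rw [interior_closedBox]
  exact forall_congr' fun i => hΦ.apply_mem_Ioo_iff hΦ' hx i

theorem bijOn_closedBox (hab : ∀ i, a i < b i) (hΦ : FixesFaces a b Φ)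
    (hΦ' : ∀ x ∈ closedBox a b, HasStrictFDerivAt Φ (Φ' x : _ →L[ℝ] _) x) :
    BijOn Φ (closedBox a b) (closedBox a b) := by
  have := Fintype.ofFinite ι
  have hΦ'_fderiv := fun x hx => (hΦ' x hx).hasFDerivAt
  exact bijOn_of_hasStrictFDerivAt isCompact_closedBox
    (convex_closedBox.isPathConnected ((nonempty_interior_closedBox hab).mono interior_subset))
    (closure_interior_closedBox hab).ge convex_closedBox hΦ' (hΦ.mapsTo_closedBox hΦ'_fderiv)
    fun x hx => hΦ.apply_mem_interior_closedBox_iff hΦ'_fderiv hx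

theorem bijOn_interior_closedBox (hab : ∀ i, a i < b i) (hΦ : FixesFaces a b Φ)
    (hΦ' : ∀ x ∈ closedBox a b, HasStrictFDerivAt Φ (Φ' x : _ →L[ℝ] _) x) :
    BijOn Φ (interior (closedBox a b)) (interior (closedBox a b)) := by
  have hpreimage : closedBox a b ∩ Φ ⁻¹' interior (closedBox a b) = interior (closedBox a b) :=
    calc closedBox a b ∩ Φ ⁻¹' interior (closedBox a b)
        = closedBox a b ∩ interior (closedBox a b) := ext fun _ => and_congr_right fun hx =>
          hΦ.apply_mem_interior_closedBox_iff (fun y hy => (hΦ' y hy).hasFDerivAt) hx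
      _ = interior (closedBox a b) := inter_eq_right.2 interior_subset
  simpa only [hpreimage] using (hΦ.bijOn_closedBox hab hΦ').subset_right interior_subset

end FixesFaces

end Faces

theorem rectangle_registration_bijective_general {ι : Type*} [Finite ι] (a b : ι → ℝ)
    (hab : ∀ i, a i < b i) (Ω : Set (EuclideanSpace ℝ ι))
    (hΩ : Ω = {x | ∀ i, x i ∈ Ioo (a i) (b i)})
    (Φ : EuclideanSpace ℝ ι → EuclideanSpace ℝ ι)
    (Φ' : EuclideanSpace ℝ ι → EuclideanSpace ℝ ι →L[ℝ] EuclideanSpace ℝ ι)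
    (hΦ' : ∀ x ∈ closure Ω, HasStrictFDerivAt Φ (Φ' x) x)
    (hbc : ∀ x ∈ closure Ω, ∀ i, (x i = a i ∨ x i = b i) → Φ x i = x i)
    (hdet : ∀ x ∈ closure Ω, (Φ' x).det ≠ 0) :
    BijOn Φ (closure Ω) (closure Ω) ∧ BijOn Φ Ω Ω := by
  have := Fintype.ofFinite ι
  obtain rfl : Ω = interior (closedBox a b) := hΩ.trans interior_closedBox.symm
  rw [closure_interior_closedBox hab] at hΦ' hbc hdet ⊢
  have hfix : FixesFaces a b Φ := fun x hx i hi => hbc x hx i (by grind [hx i])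
  have hequiv : ∀ x ∈ closedBox a b, ∃ e : EuclideanSpace ℝ ι ≃L[ℝ] EuclideanSpace ℝ ι,
      (e : _ →L[ℝ] _) = Φ' x := fun x hx =>
    ⟨_, (Φ' x).coe_toContinuousLinearEquivOfDetNeZero (hdet x hx)⟩
  choose! Φ'_equiv hΦ'_equiv using hequiv
  have hstrict : ∀ x ∈ closedBox a b, HasStrictFDerivAt Φ (Φ'_equiv x : _ →L[ℝ] _) x :=
    fun x hx => hΦ'_equiv x hx ▸ hΦ' x hx
  exact ⟨hfix.bijOn_closedBox hab hstrict, hfix.bijOn_interior_closedBox hab hstrict⟩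

/-- Let `Ω = (a₁,b₁) × (a₂,b₂)` be an open rectangle in `ℝ²` and let
`φ : ℝ² → ℝ²` be continuously differentiable on an open neighborhood `U` of the closure
of `Ω`, satisfying the boundary condition `φ ⬝ n = 0` on `∂Ω` (i.e. the first component
of `φ` vanishes on the vertical edges and the second component vanishes on the horizontal
edges).  If the Jacobian determinant of `Φ = id + φ` is strictly positive on the closure
of `Ω`, then `Φ` maps the closure of `Ω` bijectively onto itself, and `Ω` bijectively
onto itself. -/
theorem rectangle_registration_bijective
    (a₁ b₁ a₂ b₂ : ℝ) (hab₁ : a₁ < b₁) (hab₂ : a₂ < b₂)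
    (Ω : Set (EuclideanSpace ℝ (Fin 2)))
    (hΩ : Ω = {x : EuclideanSpace ℝ (Fin 2) |
      x 0 ∈ Set.Ioo a₁ b₁ ∧ x 1 ∈ Set.Ioo a₂ b₂})
    (φ Φ : EuclideanSpace ℝ (Fin 2) → EuclideanSpace ℝ (Fin 2))
    (hΦ : Φ = fun x => x + φ x)
    (U : Set (EuclideanSpace ℝ (Fin 2))) (hUopen : IsOpen U) (hUnbhd : closure Ω ⊆ U)
    (hφ : ContDiffOn ℝ 1 φ U)
    (hbc₁ : ∀ x ∈ closure Ω, (x 0 = a₁ ∨ x 0 = b₁) → φ x 0 = 0)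
    (hbc₂ : ∀ x ∈ closure Ω, (x 1 = a₂ ∨ x 1 = b₂) → φ x 1 = 0)
    (hjac : ∀ x ∈ closure Ω, 0 < LinearMap.det (fderiv ℝ Φ x :
      EuclideanSpace ℝ (Fin 2) →ₗ[ℝ] EuclideanSpace ℝ (Fin 2))) :
    Set.BijOn Φ (closure Ω) (closure Ω) ∧ Set.BijOn Φ Ω Ω := by
  have hstrict : ∀ x ∈ closure Ω, HasStrictFDerivAt Φ (fderiv ℝ Φ x) x := by
    intro x hx
    rw [hΦ]
    exact (contDiffAt_id.add (hφ.contDiffAt (hUopen.mem_nhds (hUnbhd hx)))).hasStrictFDerivAt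
      one_ne_zero
  refine rectangle_registration_bijective_general ![a₁, a₂] ![b₁, b₂]
    (Fin.forall_fin_two.2 ⟨hab₁, hab₂⟩) Ω (by simpa [Fin.forall_fin_two] using hΩ) Φ (fderiv ℝ Φ)
    hstrict (fun x hx => Fin.forall_fin_two.2 ⟨fun h => ?_, fun h => ?_⟩)
    fun x hx => (hjac x hx).ne'
  · simpa [hΦ] using hbc₁ x hx h
  · simpa [hΦ] using hbc₂ x hx h
end

section
/- Let D = {x ∈ ℝ² : ‖x‖₂ ≤ 1} be the closed unit disk and S = {x ∈ ℝ² : ‖x‖₂ = 1} the unit circle. Let Φ₁, Φ₂ : ℝ² → ℝ² be continuous maps with Φ₁(S) ⊆ S and Φ₂(S) ⊆ S, and suppose there exists x₀ ∈ S with Φ₁(x₀) ≠ Φ₂(x₀). Then for every t ∈ (0,1), the convex combination Φ_t = (1−t)Φ₁ + tΦ₂ is not a bijection from D onto D. -/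
/-!
An injective continuous map of the disk into the plane sends boundary points to boundary points of
the image. Indeed, removing a boundary point `x₀` from the disk leaves a convex, hence simply
connected, set, on which `f - f x₀` has a continuous logarithm. If `f x₀` were interior to the
image, a small circle around `f x₀` would pull back to a loop along which this logarithm gains
`2πi`. At `x₀`, however, strict convexity makes the convex combination of the distinct points
`Φ₁ x₀` and `Φ₂ x₀` an interior point of the disk.
-/

section

open Set Metric Function
open scoped Real

section ComplexLogarithm

open Complex

theorem eq_add_mul_I_of_exp_eq_circleMap {L : ℝ → ℂ} (hL : Continuous L) {r : ℝ}
    (hexp : ∀ θ, exp (L θ) = circleMap 0 r θ) (θ : ℝ) : L θ = L 0 + θ * I := by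
  have hlin : Continuous fun s : ℝ => L 0 + s * I := by fun_prop
  refine congrFun (isCoveringMap_exp.eq_of_comp_eq hL hlin ?_ 0 (by simp)) θ
  ext s
  simp [exp_add, hexp, circleMap_zero]

theorem not_periodic_of_exp_eq_circleMap {L : ℝ → ℂ} (hL : Continuous L) {r : ℝ}
    (hexp : ∀ θ, exp (L θ) = circleMap 0 r θ) : ¬ Periodic L (2 * π) := by
  intro hper
  have hshift := eq_add_mul_I_of_exp_eq_circleMap hL hexp (2 * π)
  rw [hper.eq, left_eq_add] at hshift
  simp [Real.pi_ne_zero] at hshift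

theorem exists_continuousMap_exp_eq {X : Type*} [TopologicalSpace X] [SimplyConnectedSpace X]
    [LocallyPathConnectedSpace X] (g : C(X, ℂ)) (hg : ∀ x, g x ≠ 0) :
    ∃ L : C(X, ℂ), ∀ x, exp (L x) = g x := by
  obtain ⟨x⟩ : Nonempty X := inferInstance
  obtain ⟨L, ⟨-, hL⟩, -⟩ :=
    isCoveringMapOn_exp.existsUnique_continuousMap_lifts g (exp_log (hg x)) hg
  exact ⟨L, congrFun hL⟩

theorem exists_ne_circleMap_of_periodic {X : Type*} [TopologicalSpace X] [SimplyConnectedSpace X]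
    [LocallyPathConnectedSpace X] {f : X → ℂ} (hf : Continuous f) {c : ℂ} (hc : ∀ x, f x ≠ c)
    {γ : ℝ → X} (hγ : Continuous γ) (hper : Periodic γ (2 * π)) (r : ℝ) :
    ∃ θ, f (γ θ) ≠ circleMap c r θ := by
  by_contra! hfγ
  obtain ⟨L, hL⟩ := exists_continuousMap_exp_eq ⟨fun x => f x - c, by fun_prop⟩
    fun x => sub_ne_zero.2 (hc x)
  refine not_periodic_of_exp_eq_circleMap (L.continuous.comp hγ) (r := r) (fun θ => ?_)
    (hper.comp L)
  rw [← circleMap_sub_center c, ← hfγ]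
  exact hL (γ θ)

end ComplexLogarithm

section InjectiveImages

theorem continuousOn_image_of_leftInvOn {X Y : Type*} [TopologicalSpace X] [TopologicalSpace Y]
    [T2Space Y] {K : Set X} (hK : IsCompact K) {f : X → Y} (hf : ContinuousOn f K) {g : Y → X}
    (hg : LeftInvOn g f K) : ContinuousOn g (f '' K) := by
  refine continuousOn_iff_isClosed.2 fun C hC => ⟨f '' (K ∩ C), ?_, ?_⟩
  · exact ((hK.inter_right hC).image_of_continuousOn (hf.mono inter_subset_left)).isClosed
  · rw [inter_eq_left.2 (image_mono inter_subset_left), inter_comm K, hg.image_inter']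

theorem apply_notMem_interior_image_of_simplyConnectedSpace_sdiff {X : Type*} [TopologicalSpace X]
    {K : Set X} (hK : IsCompact K) {x₀ : X} (hx₀ : x₀ ∈ K)
    [SimplyConnectedSpace ↥(K \ {x₀})] [LocallyPathConnectedSpace ↥(K \ {x₀})]
    {f : X → ℂ} (hf : ContinuousOn f K) (hinj : InjOn f K) : f x₀ ∉ interior (f '' K) := by
  intro hint
  obtain ⟨r, hr, hball⟩ := nhds_basis_closedBall.mem_iff.1 (mem_interior_iff_mem_nhds.1 hint)
  have hcircle : ∀ θ, circleMap (f x₀) r θ ∈ f '' K :=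
    fun θ => hball (circleMap_mem_closedBall _ hr.le θ)
  have : Nonempty X := ⟨x₀⟩
  let g := invFunOn f K
  have hfg : ∀ θ, f (g (circleMap (f x₀) r θ)) = circleMap (f x₀) r θ :=
    fun θ => invFunOn_eq (hcircle θ)
  have hmem : ∀ θ, g (circleMap (f x₀) r θ) ∈ K \ {x₀} := fun θ =>
    ⟨invFunOn_mem (hcircle θ), fun h => circleMap_ne_center hr.ne' (h ▸ hfg θ).symm⟩
  let γ : ℝ → ↥(K \ {x₀}) := fun θ => ⟨g (circleMap (f x₀) r θ), hmem θ⟩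
  have hγ : Continuous γ := ((continuousOn_image_of_leftInvOn hK hf hinj.leftInvOn_invFunOn
    ).comp_continuous (continuous_circleMap _ _) hcircle).subtype_mk hmem
  have hper : Periodic γ (2 * π) := fun θ => Subtype.ext (congrArg g (periodic_circleMap _ _ θ))
  have hne : ∀ x : ↥(K \ {x₀}), f x ≠ f x₀ := fun x => hinj.ne x.2.1 hx₀ x.2.2
  have hcont : Continuous fun x : ↥(K \ {x₀}) => f x :=
    (hf.mono sdiff_subset).comp_continuous continuous_subtype_val Subtype.prop
  obtain ⟨θ, hθ⟩ := exists_ne_circleMap_of_periodic hcont hne hγ hper r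
  exact hθ (hfg θ)

variable {E F : Type*} [AddCommGroup E] [Module ℝ E] [TopologicalSpace E]
  [IsTopologicalAddGroup E] [ContinuousSMul ℝ E] [LocallyConvexSpace ℝ E]
  [AddCommGroup F] [Module ℝ F] [TopologicalSpace F] [IsTopologicalAddGroup F]
  [ContinuousSMul ℝ F] [T2Space F] {A : Set E} {B : Set F} {x₀ : E}

theorem apply_extremePoint_notMem_interior_image_complex (hA : IsCompact A) (hconv : Convex ℝ A)
    (hx₀ : x₀ ∈ A.extremePoints ℝ) {f : E → ℂ} (hf : ContinuousOn f A) (hinj : InjOn f A) :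
    f x₀ ∉ interior (f '' A) := by
  obtain ⟨hx₀A, hpunct⟩ := hconv.mem_extremePoints_iff_convex_sdiff.1 hx₀
  rcases (A \ {x₀}).eq_empty_or_nonempty with hempty | hne
  · have himage : f '' A ⊆ {f x₀} :=
      image_singleton ▸ image_mono (sdiff_eq_empty.1 hempty)
    exact fun h => by simpa using interior_mono himage h
  · have := hpunct.contractibleSpace hne
    have := hpunct.locallyPathConnectedSpace
    exact apply_notMem_interior_image_of_simplyConnectedSpace_sdiff hA hx₀A hf hinj

theorem apply_extremePoint_notMem_interior_image (hF : Module.finrank ℝ F = 2) (hA : IsCompact A)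
    (hconv : Convex ℝ A) (hx₀ : x₀ ∈ A.extremePoints ℝ) {f : E → F} (hf : ContinuousOn f A)
    (hinj : InjOn f A) : f x₀ ∉ interior (f '' A) := by
  have : FiniteDimensional ℝ F := .of_finrank_pos (by lia)
  let e : F ≃L[ℝ] ℂ := .ofFinrankEq (hF.trans Complex.finrank_real_complex.symm)
  have hcomplex : (e ∘ f) x₀ ∉ interior ((e ∘ f) '' A) :=
    apply_extremePoint_notMem_interior_image_complex hA hconv hx₀
      (e.continuous.comp_continuousOn hf) (e.injective.comp_injOn hinj)
  rw [image_comp] at hcomplex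
  exact fun h => hcomplex (e.toHomeomorph.image_interior _ ▸ mem_image_of_mem e h)

theorem convex_combination_not_bijection_of_disk_general (hF : Module.finrank ℝ F = 2)
    (hA : IsCompact A) (hconv : Convex ℝ A) (hB : StrictConvex ℝ B) {Φ₁ Φ₂ : E → F}
    (hc₁ : ContinuousOn Φ₁ A) (hc₂ : ContinuousOn Φ₂ A) (hx₀ : x₀ ∈ A.extremePoints ℝ)
    (h₁ : Φ₁ x₀ ∈ B) (h₂ : Φ₂ x₀ ∈ B) (hne : Φ₁ x₀ ≠ Φ₂ x₀) {t : ℝ} (ht : t ∈ Ioo (0 : ℝ) 1) :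
    ¬ BijOn (fun x => (1 - t) • Φ₁ x + t • Φ₂ x) A B := by
  intro hbij
  have hinterior : (1 - t) • Φ₁ x₀ + t • Φ₂ x₀ ∈ interior B :=
    hB h₁ h₂ hne (sub_pos.2 ht.2) ht.1 (sub_add_cancel 1 t)
  have hboundary := apply_extremePoint_notMem_interior_image hF hA hconv hx₀
    ((hc₁.const_smul (1 - t)).add (hc₂.const_smul t)) hbij.injOn
  exact hboundary (hbij.image_eq.symm ▸ hinterior)

end InjectiveImages

end

/-- the paper's Lemma 2.2.  Let `D` be the closed unit disk and `S`
the unit circle in `ℝ²`.  Let `Φ₁, Φ₂ : ℝ² → ℝ²` be continuous maps with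
`Φ₁(S) ⊆ S`, `Φ₂(S) ⊆ S`, and `Φ₁(x₀) ≠ Φ₂(x₀)` for some `x₀ ∈ S`.  Then for every
`t ∈ (0,1)`, the convex combination `Φ_t = (1-t)Φ₁ + tΦ₂` is not a bijection from `D`
onto `D`. -/
theorem convex_combination_not_bijection_of_disk
    (Φ₁ Φ₂ : EuclideanSpace ℝ (Fin 2) → EuclideanSpace ℝ (Fin 2))
    (hc₁ : Continuous Φ₁) (hc₂ : Continuous Φ₂)
    (h₁ : Set.MapsTo Φ₁ (Metric.sphere (0 : EuclideanSpace ℝ (Fin 2)) 1)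
      (Metric.sphere (0 : EuclideanSpace ℝ (Fin 2)) 1))
    (h₂ : Set.MapsTo Φ₂ (Metric.sphere (0 : EuclideanSpace ℝ (Fin 2)) 1)
      (Metric.sphere (0 : EuclideanSpace ℝ (Fin 2)) 1))
    (x₀ : EuclideanSpace ℝ (Fin 2))
    (hx₀ : x₀ ∈ Metric.sphere (0 : EuclideanSpace ℝ (Fin 2)) 1)
    (hne : Φ₁ x₀ ≠ Φ₂ x₀) :
    ∀ t ∈ Set.Ioo (0 : ℝ) 1,
      ¬ Set.BijOn (fun x => (1 - t) • Φ₁ x + t • Φ₂ x)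
          (Metric.closedBall (0 : EuclideanSpace ℝ (Fin 2)) 1)
          (Metric.closedBall (0 : EuclideanSpace ℝ (Fin 2)) 1) := by
  intro t ht
  exact convex_combination_not_bijection_of_disk_general finrank_euclideanSpace_fin
    (isCompact_closedBall 0 1) (convex_closedBall 0 1) (strictConvex_closedBall ℝ 0 1)
    hc₁.continuousOn hc₂.continuousOn
    (StrictConvexSpace.sphere_subset_extremePoints_closedBall 0 one_ne_zero hx₀)
    (Metric.sphere_subset_closedBall (h₁ hx₀)) (Metric.sphere_subset_closedBall (h₂ hx₀)) hne ht
end
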